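/- arXiv:2011.11432 — 3 statements merged into one kernel-verified Lean document; each statement's English description precedes it below -/
import Mathlib

section
/- Let n ≥ 2 and let S₁ and S₂ be oriented hyperspheres in ℝ^n with centers p₁, p₂ ∈ ℝ^n and signed radii r₁, r₂ ∈ ℝ, with Lie coordinates k(p₁,r₁) and k(p₂,r₂). Then S₁ and S₂ are in oriented contact, i.e. |p₁ − p₂| = |r₁ − r₂|, if and only if ⟨k(p₁,r₁), k(p₂,r₂)⟩ = 0. -/
/-!
Writing `s = p·p - r²`, the first two Lie coordinates `(1 + s)/2` and `(1 - s)/2` of two spheres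
contribute `-(s₁ + s₂)/2` to the Lie product, and the remaining ones contribute `p₁·p₂ - r₁r₂`.
The total is `-(|p₁ - p₂|² - (r₁ - r₂)²)/2` (`lieProd_lieSphere`), which vanishes exactly when
`|p₁ - p₂|² = (r₁ - r₂)²`; both sides of the contact condition being nonnegative, this is the
contact condition squared.
-/

/-- The Lie scalar product on `ℝ^{n+3}`:
`⟨x,y⟩ = -x₁y₁ + x₂y₂ + ⋯ + x_{n+2}y_{n+2} - x_{n+3}y_{n+3}`. -/
def lieProd {n : ℕ} (x y : Fin (n + 3) → ℝ) : ℝ :=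
  (∑ i, x i * y i) - 2 * x 0 * y 0 - 2 * x (Fin.last (n + 2)) * y (Fin.last (n + 2))

/-- The Lie coordinates of the oriented hypersphere in `ℝ^n` with center `p` and
signed radius `r`: `k(p,r) = ((1+p·p-r²)/2, (1-p·p+r²)/2, p, r)`. -/
noncomputable def lieSphere {n : ℕ} (p : Fin n → ℝ) (r : ℝ) : Fin (n + 3) → ℝ :=
  Fin.cons ((1 + (∑ i, p i * p i) - r ^ 2) / 2)
    (Fin.cons ((1 - (∑ i, p i * p i) + r ^ 2) / 2) (Fin.snoc p r))

theorem lieProd_lieSphere {n : ℕ} (p₁ p₂ : Fin n → ℝ) (r₁ r₂ : ℝ) :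
    lieProd (lieSphere p₁ r₁) (lieSphere p₂ r₂) =
      -((∑ i, (p₁ i - p₂ i) ^ 2) - (r₁ - r₂) ^ 2) / 2 := by
  have hlast : ∀ (p : Fin n → ℝ) (r : ℝ), lieSphere p r (Fin.last (n + 2)) = r := by
    intro p r
    simp only [lieSphere, ← Fin.succ_last, Fin.cons_succ, Fin.snoc_last]
  have hsum : ∑ i, (p₁ i - p₂ i) ^ 2 =
      ∑ i, p₁ i * p₁ i - 2 * ∑ i, p₁ i * p₂ i + ∑ i, p₂ i * p₂ i := by
    rw [Finset.mul_sum, ← Finset.sum_sub_distrib, ← Finset.sum_add_distrib]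
    exact Finset.sum_congr rfl fun i _ => by ring
  rw [lieProd, hlast, hlast, hsum]
  simp only [lieSphere, Fin.sum_univ_succ (n := n + 2), Fin.sum_univ_succ (n := n + 1),
    Fin.sum_univ_castSucc (n := n), Fin.cons_zero, Fin.cons_succ, Fin.snoc_castSucc,
    Fin.snoc_last]
  ring

/-- Two oriented hyperspheres in `ℝ^n` are in oriented contact,
i.e. `|p₁ - p₂| = |r₁ - r₂|`, iff the Lie scalar product of their
Lie coordinates vanishes. -/
theorem lie_oriented_contact_spheres (n : ℕ) (hn : 2 ≤ n)
    (p₁ p₂ : Fin n → ℝ) (r₁ r₂ : ℝ) :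
    Real.sqrt (∑ i, (p₁ i - p₂ i) ^ 2) = |r₁ - r₂| ↔
      lieProd (lieSphere p₁ r₁) (lieSphere p₂ r₂) = 0 := by
  have h0 : 0 ≤ ∑ i, (p₁ i - p₂ i) ^ 2 := Finset.sum_nonneg fun i _ => sq_nonneg _
  rw [lieProd_lieSphere, Real.sqrt_eq_iff_eq_sq h0 (abs_nonneg _), sq_abs]
  constructor <;> intro h <;> linarith
end

section
/- Let n ≥ 2 and let k₁, k₂ ∈ ℝ^{n+3} be linearly independent lightlike vectors with ⟨k₁, k₂⟩ = 0. Then {v ∈ ℝ^{n+3} : ⟨v,v⟩ = 0, ⟨v,k₁⟩ = 0 and ⟨v,k₂⟩ = 0} = span{k₁, k₂}. That is, the set of spheres in oriented contact with both of the spheres [k₁] and [k₂] is precisely the parabolic pencil of spheres corresponding to the points of the line on the Lie quadric through [k₁] and [k₂]. -/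
theorem lieProd_comm {n : ℕ} (x y : Fin (n + 3) → ℝ) : lieProd x y = lieProd y x := by
  simp only [lieProd, mul_comm (x _) (y _), mul_assoc]

theorem lieProd_add_left {n : ℕ} (x y z : Fin (n + 3) → ℝ) :
    lieProd (x + y) z = lieProd x z + lieProd y z := by
  simp only [lieProd, Pi.add_apply, add_mul, Finset.sum_add_distrib]
  ring

theorem lieProd_smul_left {n : ℕ} (a : ℝ) (x z : Fin (n + 3) → ℝ) :
    lieProd (a • x) z = a * lieProd x z := by
  simp only [lieProd, Pi.smul_apply, smul_eq_mul, mul_assoc, ← Finset.mul_sum]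
  ring

theorem lieProd_add_right {n : ℕ} (x y z : Fin (n + 3) → ℝ) :
    lieProd x (y + z) = lieProd x y + lieProd x z := by
  rw [lieProd_comm, lieProd_add_left, lieProd_comm y, lieProd_comm z]

theorem lieProd_smul_right {n : ℕ} (a : ℝ) (x z : Fin (n + 3) → ℝ) :
    lieProd x (a • z) = a * lieProd x z := by
  rw [lieProd_comm, lieProd_smul_left, lieProd_comm z]

/-- The Lie scalar product is positive definite on the vectors whose two timelike coordinates
(the first and the last) vanish. -/
theorem eq_zero_of_lightlike {n : ℕ} {x : Fin (n + 3) → ℝ} (hx : lieProd x x = 0)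
    (h0 : x 0 = 0) (hl : x (Fin.last (n + 2)) = 0) : x = 0 := by
  simp only [lieProd, h0, hl, mul_zero, sub_zero] at hx
  rw [Finset.sum_eq_zero_iff_of_nonneg fun i _ => mul_self_nonneg (x i)] at hx
  funext i
  exact mul_self_eq_zero.mp (hx i (Finset.mem_univ i))

/-- For linearly independent lightlike vectors `k₁, k₂` with `⟨k₁, k₂⟩ = 0`, the set
of lightlike vectors orthogonal to both `k₁` and `k₂` is exactly `span{k₁, k₂}`:
the spheres in oriented contact with both `[k₁]` and `[k₂]` form the parabolic
pencil corresponding to the line on the Lie quadric through `[k₁]` and `[k₂]`. -/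
theorem lie_parabolic_pencil (n : ℕ) (hn : 2 ≤ n)
    (k₁ k₂ : Fin (n + 3) → ℝ) (hind : LinearIndependent ℝ ![k₁, k₂])
    (hk₁ : lieProd k₁ k₁ = 0) (hk₂ : lieProd k₂ k₂ = 0)
    (hk₁₂ : lieProd k₁ k₂ = 0) :
    {v : Fin (n + 3) → ℝ | lieProd v v = 0 ∧ lieProd v k₁ = 0 ∧ lieProd v k₂ = 0} =
      ↑(Submodule.span ℝ ({k₁, k₂} : Set (Fin (n + 3) → ℝ))) := by
  -- the determinant of the timelike coordinates of `k₁, k₂`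
  set D := k₁ 0 * k₂ (Fin.last (n + 2)) - k₁ (Fin.last (n + 2)) * k₂ 0 with hD_def
  have hk₂₁ : lieProd k₂ k₁ = 0 := by rw [lieProd_comm, hk₁₂]
  have hpair := LinearIndependent.pair_iff.mp hind
  -- injectivity of the projection on `span{k₁, k₂}`, in terms of coefficients
  have hcomb : ∀ a b : ℝ, a * k₁ 0 + b * k₂ 0 = 0 →
      a * k₁ (Fin.last (n + 2)) + b * k₂ (Fin.last (n + 2)) = 0 → a = 0 ∧ b = 0 := by
    intro a b h0 hl
    apply hpair
    apply eq_zero_of_lightlike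
    · simp [lieProd_add_left, lieProd_add_right, lieProd_smul_left, lieProd_smul_right,
        hk₁, hk₂, hk₁₂, hk₂₁]
    · simpa using h0
    · simpa using hl
  have hD : D ≠ 0 := by
    intro hD
    rw [hD_def] at hD
    -- `k₂ 0 • k₁ - k₁ 0 • k₂` has first coordinate `0` and last coordinate `D`, so `D = 0` kills
    -- its coefficients; exchanging the two coordinates kills the other two entries
    obtain ⟨h20, h10⟩ := hcomb (k₂ 0) (-k₁ 0) (by ring) (by linarith)
    obtain ⟨h2l, h1l⟩ := hcomb (k₂ (Fin.last (n + 2))) (-k₁ (Fin.last (n + 2)))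
      (by linarith) (by ring)
    exact one_ne_zero (hcomb 1 0 (by linarith) (by linarith)).1
  ext v
  simp only [Set.mem_ofPred_eq, SetLike.mem_coe, Submodule.mem_span_pair]
  constructor
  · rintro ⟨hv, hv₁, hv₂⟩
    have hv₁' : lieProd k₁ v = 0 := by rw [lieProd_comm, hv₁]
    have hv₂' : lieProd k₂ v = 0 := by rw [lieProd_comm, hv₂]
    -- the coefficients of `v` given by Cramer's rule
    set a := (v 0 * k₂ (Fin.last (n + 2)) - v (Fin.last (n + 2)) * k₂ 0) / D with ha
    set b := (k₁ 0 * v (Fin.last (n + 2)) - k₁ (Fin.last (n + 2)) * v 0) / D with hb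
    refine ⟨a, b, ?_⟩
    have hzero : a • k₁ + b • k₂ + (-1 : ℝ) • v = 0 := by
      apply eq_zero_of_lightlike
      · simp [lieProd_add_left, lieProd_add_right, lieProd_smul_left, lieProd_smul_right,
          hk₁, hk₂, hk₁₂, hk₂₁, hv, hv₁, hv₂, hv₁', hv₂', -neg_smul]
      · simp only [Pi.add_apply, Pi.smul_apply, smul_eq_mul, ha, hb]
        field_simp
        rw [hD_def]
        ring
      · simp only [Pi.add_apply, Pi.smul_apply, smul_eq_mul, ha, hb]
        field_simp
        rw [hD_def]
        ring
    rwa [neg_one_smul, ← sub_eq_add_neg, sub_eq_zero] at hzero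
  · rintro ⟨a, b, rfl⟩
    simp [lieProd_add_left, lieProd_add_right, lieProd_smul_left, lieProd_smul_right,
      hk₁, hk₂, hk₁₂, hk₂₁]
end

section
/- Let n ≥ 2 and let A : ℝ^{n+2} → ℝ^{n+2} be an invertible linear map that maps the Lorentz light cone {x : (x,x) = 0} onto itself. Then there is a constant c > 0 such that (Ax, Ax) = c·(x,x) for all x ∈ ℝ^{n+2}; equivalently, A is a nonzero scalar multiple of an orthogonal transformation of the Lorentz form. Consequently every Möbius transformation is induced by an element of O(n+1,1). -/
/-!
Write `e` for the timelike unit vector `(1, 0, …, 0)`. A vector `v` with `v 0 = 0` and Euclidean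
length `r` gives two lightlike vectors `v ± r e`. Since their images are lightlike, expanding
`(A(v ± r e), A(v ± r e)) = 0` yields `(Av, Ae) = 0` and `(Av, Av) = -(Ae, Ae) r²`. Decomposing
`x = x₀ e + v` then gives `(Ax, Ax) = c (x, x)` with `c = -(Ae, Ae)`.

The constant is positive by signature. If `c = 0`, surjectivity makes the form vanish identically.
If `c < 0`, then `A` maps the plane of `e₁, e₂` to a plane on which the form is negative definite;
but every plane meets the hyperplane `{x₀ = 0}`, where the form is nonnegative, in a nonzero vector.
-/

/-- The Lorentz scalar product on `ℝ^{n+2}`: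
`(x,y) = -x₁y₁ + x₂y₂ + ⋯ + x_{n+2}y_{n+2}`. -/
def lorentzProd {n : ℕ} (x y : Fin (n + 2) → ℝ) : ℝ :=
  (∑ i, x i * y i) - 2 * x 0 * y 0

lemma lorentzProd_comb {n : ℕ} (a b : ℝ) (x y : Fin (n + 2) → ℝ) :
    lorentzProd (a • x + b • y) (a • x + b • y) =
      a ^ 2 * lorentzProd x x + 2 * a * b * lorentzProd x y + b ^ 2 * lorentzProd y y := by
  have h : ∑ i, (a • x + b • y) i * (a • x + b • y) i =
      a ^ 2 * ∑ i, x i * x i + 2 * a * b * ∑ i, x i * y i + b ^ 2 * ∑ i, y i * y i := by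
    simp only [Finset.mul_sum, ← Finset.sum_add_distrib]
    refine Finset.sum_congr rfl fun i _ => ?_
    simp only [Pi.add_apply, Pi.smul_apply, smul_eq_mul]
    ring
  unfold lorentzProd
  rw [h]
  simp only [Pi.add_apply, Pi.smul_apply, smul_eq_mul]
  ring

lemma lorentzProd_single_zero {n : ℕ} (x : Fin (n + 2) → ℝ) :
    lorentzProd x (Pi.single 0 1) = -x 0 := by
  simp [lorentzProd, Pi.single_apply]
  ring

lemma lorentzProd_single_of_ne {n : ℕ} (x : Fin (n + 2) → ℝ) {j : Fin (n + 2)} (hj : j ≠ 0) :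
    lorentzProd x (Pi.single j 1) = x j := by
  simp [lorentzProd, Pi.single_apply, hj.symm]

lemma lorentzProd_self_of_zero {n : ℕ} {x : Fin (n + 2) → ℝ} (hx : x 0 = 0) :
    lorentzProd x x = ∑ i, x i * x i := by
  simp [lorentzProd, hx]

lemma lorentzProd_self_nonneg {n : ℕ} {x : Fin (n + 2) → ℝ} (hx : x 0 = 0) :
    0 ≤ lorentzProd x x := by
  rw [lorentzProd_self_of_zero hx]
  exact Finset.sum_nonneg fun i _ => mul_self_nonneg _

/-- The core of the argument on the hyperplane `{x₀ = 0}`, obtained by expanding the form at the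
images of the lightlike vectors `v ± r e`. -/
lemma lorentzProd_map_of_zero {n : ℕ} (A : (Fin (n + 2) → ℝ) →ₗ[ℝ] (Fin (n + 2) → ℝ))
    (hA : ∀ x, lorentzProd x x = 0 → lorentzProd (A x) (A x) = 0)
    {v : Fin (n + 2) → ℝ} (hv : v 0 = 0) :
    lorentzProd (A v) (A (Pi.single 0 1)) = 0 ∧
      lorentzProd (A v) (A v) =
        -lorentzProd (A (Pi.single 0 1)) (A (Pi.single 0 1)) * lorentzProd v v := by
  have key : ∀ r : ℝ, r ^ 2 = lorentzProd v v →
      lorentzProd (A v) (A v) + 2 * r * lorentzProd (A v) (A (Pi.single 0 1)) +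
        r ^ 2 * lorentzProd (A (Pi.single 0 1)) (A (Pi.single 0 1)) = 0 := by
    intro r hr
    have h := hA ((1 : ℝ) • v + r • Pi.single 0 1) (by
      rw [lorentzProd_comb, lorentzProd_single_zero, lorentzProd_single_zero, ← hr, hv]
      simp)
    rw [map_add, map_smul, map_smul, lorentzProd_comb] at h
    linarith
  have hr := Real.sq_sqrt (lorentzProd_self_nonneg hv)
  have h1 := key _ hr
  have h2 := key (-√(lorentzProd v v)) (by rw [neg_sq, hr])
  rw [neg_sq] at h2
  rw [hr] at h1 h2
  refine ⟨?_, by linarith⟩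
  have h3 : √(lorentzProd v v) * lorentzProd (A v) (A (Pi.single 0 1)) = 0 := by linarith
  rcases mul_eq_zero.1 h3 with h | h
  · have h0 : ∑ i, v i * v i = 0 := by
      rw [← lorentzProd_self_of_zero hv, ← hr, h]
      norm_num
    have hv0 : v = 0 := by
      funext i
      exact mul_self_eq_zero.1
        ((Finset.sum_eq_zero_iff_of_nonneg fun i _ => mul_self_nonneg (v i)).1 h0 i
          (Finset.mem_univ i))
    simp [hv0, lorentzProd]
  · exact h

/-- If an invertible linear map `A` of `ℝ^{n+2}` maps the Lorentz light cone onto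
itself, then `A` multiplies the Lorentz form by a positive constant, i.e. `A` is a
nonzero scalar multiple of an orthogonal transformation of the Lorentz form.
Consequently every Möbius transformation is induced by an element of `O(n+1,1)`. -/
theorem lorentz_lightcone_preserving (n : ℕ) (hn : 2 ≤ n)
    (A : (Fin (n + 2) → ℝ) →ₗ[ℝ] (Fin (n + 2) → ℝ)) (hA : Function.Bijective A)
    (hcone : A '' {x | lorentzProd x x = 0} = {x | lorentzProd x x = 0}) :
    ∃ c : ℝ, 0 < c ∧ ∀ x, lorentzProd (A x) (A x) = c * lorentzProd x x := by
  have hA0 : ∀ x, lorentzProd x x = 0 → lorentzProd (A x) (A x) = 0 := fun x hx =>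
    hcone.subset ⟨x, hx, rfl⟩
  obtain ⟨c, hc⟩ : ∃ c, c = -lorentzProd (A (Pi.single 0 1)) (A (Pi.single 0 1)) := ⟨_, rfl⟩
  have hform : ∀ x, lorentzProd (A x) (A x) = c * lorentzProd x x := by
    intro x
    obtain ⟨v, hvdef⟩ : ∃ v, v = x - x 0 • Pi.single 0 (1 : ℝ) := ⟨_, rfl⟩
    have hv : v 0 = 0 := by simp [hvdef]
    have hx : x = (1 : ℝ) • v + x 0 • Pi.single 0 (1 : ℝ) := by simp [hvdef]
    obtain ⟨h1, h2⟩ := lorentzProd_map_of_zero A hA0 hv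
    generalize x 0 = t at hx
    rw [hx, map_add, map_smul, map_smul, lorentzProd_comb, lorentzProd_comb, h1, h2,
      lorentzProd_single_zero, lorentzProd_single_zero, hv, hc]
    simp
    ring
  refine ⟨c, ?_, hform⟩
  obtain ⟨i, j, hi, hj, hij⟩ : ∃ i j : Fin (n + 2), i ≠ 0 ∧ j ≠ 0 ∧ i ≠ j :=
    ⟨⟨1, by omega⟩, ⟨2, by omega⟩, by simp [Fin.ext_iff], by simp [Fin.ext_iff],
      by simp [Fin.ext_iff]⟩
  -- `a • eᵢ + b • eⱼ` has norm `a² + b²`.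
  have hplane : ∀ a b : ℝ, lorentzProd (A (a • Pi.single i 1 + b • Pi.single j 1))
      (A (a • Pi.single i 1 + b • Pi.single j 1)) = c * (a ^ 2 + b ^ 2) := by
    intro a b
    rw [hform, lorentzProd_comb, lorentzProd_single_of_ne _ hi, lorentzProd_single_of_ne _ hj,
      lorentzProd_single_of_ne _ hj]
    simp [hij.symm]
  by_contra! hneg
  rcases hneg.lt_or_eq with hlt | heq
  · obtain ⟨a, b, hab, hz⟩ : ∃ a b : ℝ, 0 < a ^ 2 + b ^ 2 ∧
        A (a • Pi.single i 1 + b • Pi.single j 1) 0 = 0 := by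
      by_cases h : A (Pi.single i 1) 0 = 0
      · exact ⟨1, 0, by norm_num, by simp [h]⟩
      · exact ⟨-A (Pi.single j 1) 0, A (Pi.single i 1) 0, by positivity, by simp; ring⟩
    have h := lorentzProd_self_nonneg hz
    rw [hplane] at h
    nlinarith [mul_neg_of_neg_of_pos hlt hab]
  · obtain ⟨x, hx⟩ := hA.2 (Pi.single i 1)
    have h := hform x
    rw [hx, lorentzProd_single_of_ne _ hi, heq] at h
    simp at h
end
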